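/- arXiv:0806.2375 — 3 statements merged into one kernel-verified Lean document; each statement's English description precedes it below -/
import Mathlib

section
/- The 16×16 integer matrix G given in the paper for DIH6(16) (block form [[2A, A],[A, 2A]] where A is the E8 Cartan-type Gram data; explicitly the matrix with diagonal 4 on the first 8 rows paired as listed) is positive definite and is the Gram matrix of a lattice isometric to A2 ⊗ E8; its Smith normal form has invariant factors 1,1,1,1,1,1,1,1,3,3,3,3,3,3,3,3. -/
open Matrix Kronecker

/-- A Gram matrix for the `A2` root lattice. -/
def A2Gram : Matrix (Fin 2) (Fin 2) ℤ := !![2, -1; -1, 2]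

/-- A Gram matrix for the `E8` root lattice. -/
def E8Gram : Matrix (Fin 8) (Fin 8) ℤ :=
  !![ 2,-1, 0, 0, 0, 0, 0, 0;
     -1, 2,-1, 0, 0, 0, 0, 0;
      0,-1, 2,-1, 0, 0, 0,-1;
      0, 0,-1, 2,-1, 0, 0, 0;
      0, 0, 0,-1, 2,-1, 0, 0;
      0, 0, 0, 0,-1, 2,-1, 0;
      0, 0, 0, 0, 0,-1, 2, 0;
      0, 0,-1, 0, 0, 0, 0, 2]

/-- The 16×16 block matrix `[[2B, B], [B, 2B]]` with `B` the `E8` Gram matrix, the Gram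
matrix of the lattice `DIH6(16)` from the paper. -/
def DIH6_16Gram : Matrix (Fin 8 ⊕ Fin 8) (Fin 8 ⊕ Fin 8) ℤ :=
  Matrix.fromBlocks (2 • E8Gram) E8Gram E8Gram (2 • E8Gram)

/- If `a, b` is a basis of `A2` with `⟨a, b⟩ = -1`, then in the basis `a, -b` the Gram matrix of
`A2 ⊗ L` is `[[2B, B], [B, 2B]]`, where `B` is the Gram matrix of `L`; so positive definiteness is
inherited from `A2` and `L`. A unimodular block row operation makes `[[2B, B], [B, 2B]]` block
triangular with diagonal blocks `B` and `3B`; for invertible `B`, a column operation built from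
`B⁻¹` then leaves `diag(1, 3)`. For `E8`, coordinates of the simple roots exhibit `B` as a Gram
matrix of real vectors. -/

section PosDef

variable {m n : Type*} [Fintype m] [Fintype n] [DecidableEq n]

lemma isUnit_map_intCast {P : Matrix n n ℤ} (hP : P.det ≠ 0) :
    IsUnit (P.map (Int.cast : ℤ → ℝ)) := by
  rw [isUnit_iff_isUnit_det, isUnit_iff_ne_zero, ← Int.cast_det]
  exact Int.cast_ne_zero.mpr hP

lemma posDef_map_intCast_of_smul_eq_transpose_mul_self {k : ℕ} {B : Matrix n n ℤ}
    {C : Matrix m n ℤ} (hk : 0 < k) (hC : k • B = Cᵀ * C) (hB : B.det ≠ 0) :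
    (B.map (Int.cast : ℤ → ℝ)).PosDef := by
  have hgram : B.map (Int.cast : ℤ → ℝ) =
      (k : ℝ)⁻¹ • ((C.map (Int.cast : ℤ → ℝ))ᴴ * C.map (Int.cast : ℤ → ℝ)) := by
    rw [eq_inv_smul_iff₀ (by positivity), conjTranspose_eq_transpose_of_trivial, ← transpose_map]
    ext i j
    have hij := congrArg (Int.cast : ℤ → ℝ) (congrFun₂ hC i j)
    simpa [mul_apply] using hij
  have hsemi : (B.map (Int.cast : ℤ → ℝ)).PosSemidef :=
    hgram ▸ (posSemidef_conjTranspose_mul_self _).smul (by positivity)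
  exact hsemi.posDef_iff_isUnit.mpr (isUnit_map_intCast hB)

lemma posDef_map_intCast_transpose_mul_mul {H P : Matrix n n ℤ}
    (hH : (H.map (Int.cast : ℤ → ℝ)).PosDef) (hP : P.det ≠ 0) :
    ((Pᵀ * H * P).map (Int.cast : ℤ → ℝ)).PosDef := by
  rw [Matrix.map_mul_intCast, Matrix.map_mul_intCast, transpose_map,
    ← conjTranspose_eq_transpose_of_trivial, ← star_eq_conjTranspose]
  exact (isUnit_map_intCast hP).posDef_star_left_conjugate_iff.mpr hH

lemma posDef_map_intCast_kronecker {m n : Type*} [Finite m] [Finite n] {A : Matrix m m ℤ}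
    {B : Matrix n n ℤ} (hA : (A.map (Int.cast : ℤ → ℝ)).PosDef)
    (hB : (B.map (Int.cast : ℤ → ℝ)).PosDef) :
    ((A ⊗ₖ B).map (Int.cast : ℤ → ℝ)).PosDef := by
  have hmap : (A ⊗ₖ B).map (Int.cast : ℤ → ℝ) =
      A.map (Int.cast : ℤ → ℝ) ⊗ₖ B.map (Int.cast : ℤ → ℝ) := by
    ext
    simp
  exact hmap ▸ hA.kronecker hB

lemma posDef_A2Gram : (A2Gram.map (Int.cast : ℤ → ℝ)).PosDef := by
  -- The columns are the simple roots `(1, -1, 0)` and `(0, 1, -1)`.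
  refine posDef_map_intCast_of_smul_eq_transpose_mul_self (k := 1)
    (C := !![1, 0; -1, 1; 0, -1]) one_pos (by decide) ?_
  simp [A2Gram]

end PosDef

section KroneckerBlocks

/-- The identification of `n ⊕ n` with `Fin 2 × n` under which the block structure of a matrix
agrees with that of a Kronecker product with a `2 × 2` matrix on the left. -/
def sumEquivFinTwoProd (n : Type*) : n ⊕ n ≃ Fin 2 × n :=
  (Equiv.boolProdEquivSum n).symm.trans (finTwoEquiv.symm.prodCongr (Equiv.refl n))

lemma kronecker_submatrix_sumEquivFinTwoProd {n R : Type*} [Mul R]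
    (A : Matrix (Fin 2) (Fin 2) R) (B : Matrix n n R) :
    (A ⊗ₖ B).submatrix (sumEquivFinTwoProd n) (sumEquivFinTwoProd n) =
      fromBlocks (A 0 0 • B) (A 0 1 • B) (A 1 0 • B) (A 1 1 • B) := by
  ext (i | i) (j | j) <;> rfl

lemma sumEquivFinTwoProd_fin_symm (n : ℕ) :
    (sumEquivFinTwoProd (Fin n)).symm =
      (finProdFinEquiv.trans (finCongr (two_mul n))).trans finSumFinEquiv.symm := by
  ext ⟨i, j⟩ : 1
  apply finSumFinEquiv.injective
  fin_cases i <;> ext <;> simp [sumEquivFinTwoProd, finTwoEquiv, finProdFinEquiv, add_comm]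

end KroneckerBlocks

section Dih6Gram

variable {n R : Type*} [CommRing R]

/-- The Gram matrix `[[2B, B], [B, 2B]]` of `A2 ⊗ L`, where `B` is the Gram matrix of `L`;
`DIH6_16Gram` is the case where `L` is the `E8` lattice. The basis of `A2` is the one whose two
vectors have inner product `1` instead of `-1`. -/
def dih6Gram (B : Matrix n n R) : Matrix (n ⊕ n) (n ⊕ n) R :=
  fromBlocks (2 • B) B B (2 • B)

variable [Fintype n] [DecidableEq n]

variable (n R) in
/-- The unimodular block row operation that brings `dih6Gram B` into block triangular form. -/
def dih6RowOp : Matrix (n ⊕ n) (n ⊕ n) R :=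
  fromBlocks 1 (-1) (-1) 2

lemma det_dih6RowOp : (dih6RowOp n R).det = 1 := by
  have hschur : (2 : Matrix n n R) - -1 * -1 = 1 := by norm_num
  rw [dih6RowOp, det_fromBlocks_one₁₁, hschur, det_one]

lemma dih6RowOp_mul_dih6Gram (B : Matrix n n R) :
    dih6RowOp n R * dih6Gram B = fromBlocks B (-B) 0 (3 • B) := by
  rw [dih6RowOp, dih6Gram, fromBlocks_multiply]
  congr 1 <;> noncomm_ring

lemma det_dih6Gram (B : Matrix n n R) :
    (dih6Gram B).det = 3 ^ Fintype.card n * B.det ^ 2 := by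
  have h := congrArg det (dih6RowOp_mul_dih6Gram B)
  rw [det_mul, det_dih6RowOp, one_mul, det_fromBlocks_zero₂₁, ← Nat.cast_smul_eq_nsmul R,
    det_smul] at h
  rw [h]
  push_cast
  ring

lemma dih6RowOp_mul_dih6Gram_mul_eq_diagonal {B : Matrix n n R} (hB : IsUnit B.det) :
    dih6RowOp n R * dih6Gram B * fromBlocks B⁻¹ B⁻¹ 0 B⁻¹ =
      diagonal (Sum.elim (fun _ => 1) (fun _ => 3)) := by
  have hthree : (3 : R) • (1 : Matrix n n R) = diagonal fun _ => 3 := smul_one_eq_diagonal 3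
  rw [dih6RowOp_mul_dih6Gram, fromBlocks_multiply, ← fromBlocks_diagonal, diagonal_one, ← hthree]
  simp [mul_nonsing_inv B hB, ← ofNat_smul_eq_nsmul R]

lemma dih6Gram_eq_transpose_mul_kronecker_mul (B : Matrix n n ℤ) :
    dih6Gram B = (fromBlocks 1 0 0 (-1))ᵀ *
      (A2Gram ⊗ₖ B).submatrix (sumEquivFinTwoProd n) (sumEquivFinTwoProd n) *
        fromBlocks 1 0 0 (-1) := by
  rw [kronecker_submatrix_sumEquivFinTwoProd, fromBlocks_transpose, fromBlocks_multiply,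
    fromBlocks_multiply]
  simp [dih6Gram, A2Gram, ofNat_smul_eq_nsmul]

lemma isUnit_det_fromBlocks_one_zero_zero_neg_one :
    IsUnit (fromBlocks 1 0 0 (-1) : Matrix (n ⊕ n) (n ⊕ n) R).det := by
  rw [det_fromBlocks_zero₂₁, det_one, one_mul, det_neg, det_one, mul_one]
  exact isUnit_one.neg.pow _

lemma posDef_dih6Gram {n : Type*} [Finite n] {B : Matrix n n ℤ}
    (hB : (B.map (Int.cast : ℤ → ℝ)).PosDef) :
    ((dih6Gram B).map (Int.cast : ℤ → ℝ)).PosDef := by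
  classical
  cases nonempty_fintype n
  rw [dih6Gram_eq_transpose_mul_kronecker_mul]
  refine posDef_map_intCast_transpose_mul_mul ?_ isUnit_det_fromBlocks_one_zero_zero_neg_one.ne_zero
  exact (posDef_map_intCast_kronecker posDef_A2Gram hB).submatrix (sumEquivFinTwoProd n).injective

end Dih6Gram

section E8

/-- The columns are the simple roots of `E8` in the standard coordinates of `ℝ⁸`, doubled so as to
have integer entries, in the order of the rows of `E8Gram`. -/
def doubledE8SimpleRoots : Matrix (Fin 8) (Fin 8) ℤ :=
  !![ 1,-2, 0, 0, 0, 0, 0, 2;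
     -1, 2,-2, 0, 0, 0, 0, 2;
     -1, 0, 2,-2, 0, 0, 0, 0;
     -1, 0, 0, 2,-2, 0, 0, 0;
     -1, 0, 0, 0, 2,-2, 0, 0;
     -1, 0, 0, 0, 0, 2,-2, 0;
     -1, 0, 0, 0, 0, 0, 2, 0;
      1, 0, 0, 0, 0, 0, 0, 0]

lemma four_smul_E8Gram : 4 • E8Gram = doubledE8SimpleRootsᵀ * doubledE8SimpleRoots := by
  decide

lemma det_E8Gram : E8Gram.det = 1 := by
  simp only [E8Gram, norm_det]

lemma posDef_E8Gram : (E8Gram.map (Int.cast : ℤ → ℝ)).PosDef :=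
  posDef_map_intCast_of_smul_eq_transpose_mul_self four_pos four_smul_E8Gram (by simp [det_E8Gram])

end E8

theorem DIH6_16_is_A2E8_general {n : ℕ} {B : Matrix (Fin n) (Fin n) ℤ}
    (hpos : (B.map (Int.cast : ℤ → ℝ)).PosDef) (hdet : IsUnit B.det) :
    ((dih6Gram B).map (Int.cast : ℤ → ℝ)).PosDef ∧
    (dih6Gram B).det = 3 ^ n ∧
    (∃ P : Matrix (Fin n ⊕ Fin n) (Fin n ⊕ Fin n) ℤ, IsUnit P.det ∧
      dih6Gram B = Pᵀ *
        (reindex ((finProdFinEquiv.trans (finCongr (two_mul n))).trans finSumFinEquiv.symm)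
          ((finProdFinEquiv.trans (finCongr (two_mul n))).trans finSumFinEquiv.symm)
          (A2Gram ⊗ₖ B)) * P) ∧
    (∃ U W : Matrix (Fin n ⊕ Fin n) (Fin n ⊕ Fin n) ℤ, IsUnit U.det ∧ IsUnit W.det ∧
      U * dih6Gram B * W = diagonal (Sum.elim (fun _ => 1) (fun _ => 3))) := by
  refine ⟨posDef_dih6Gram hpos, ?_,
    ⟨fromBlocks 1 0 0 (-1), isUnit_det_fromBlocks_one_zero_zero_neg_one, ?_⟩,
    ⟨dih6RowOp (Fin n) ℤ, fromBlocks B⁻¹ B⁻¹ 0 B⁻¹, ?_, ?_,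
      dih6RowOp_mul_dih6Gram_mul_eq_diagonal hdet⟩⟩
  · rw [det_dih6Gram, Int.isUnit_sq hdet, mul_one, Fintype.card_fin]
  · rw [← sumEquivFinTwoProd_fin_symm]
    exact dih6Gram_eq_transpose_mul_kronecker_mul B
  · simp only [det_dih6RowOp, isUnit_one]
  · have hinv : IsUnit B⁻¹.det := isUnit_nonsing_inv_det B hdet
    rw [det_fromBlocks_zero₂₁]
    exact hinv.mul hinv

/-- The 16×16 matrix `[[2B, B], [B, 2B]]` (with `B` the `E8` Gram matrix)
is positive definite, has determinant `3^8`, is the Gram matrix of a lattice isometric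
to `A2 ⊗ E8` (i.e. is unimodularly congruent to the Gram matrix of `A2 ⊗ E8`), and its
Smith normal form has invariant factors eight `1`s and eight `3`s. -/
theorem DIH6_16_is_A2E8 :
    (DIH6_16Gram.map (Int.cast : ℤ → ℝ)).PosDef ∧
    DIH6_16Gram.det = 3 ^ 8 ∧
    (∃ P : Matrix (Fin 8 ⊕ Fin 8) (Fin 8 ⊕ Fin 8) ℤ, IsUnit P.det ∧
      DIH6_16Gram = Pᵀ *
        (Matrix.reindex ((finProdFinEquiv.trans (finCongr (by norm_num : 2*8 = 8+8))).trans finSumFinEquiv.symm)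
          ((finProdFinEquiv.trans (finCongr (by norm_num : 2*8 = 8+8))).trans finSumFinEquiv.symm) (A2Gram ⊗ₖ E8Gram)) * P) ∧
    (∃ U W : Matrix (Fin 8 ⊕ Fin 8) (Fin 8 ⊕ Fin 8) ℤ, IsUnit U.det ∧ IsUnit W.det ∧
      U * DIH6_16Gram * W =
        Matrix.diagonal (Sum.elim (fun _ => (1 : ℤ)) (fun _ => (3 : ℤ)))) :=
  DIH6_16_is_A2E8_general posDef_E8Gram (det_E8Gram ▸ isUnit_one)
end

section
/- The 14×14 Gram matrix given in the paper for DIH6(12) is positive definite, even, and the corresponding lattice is rootless with Smith invariants 1,1,1,1,1,1,1,1,1,3,3,3,6,6 (so determinant 3³·6² = 972). -/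
/-!
A lattice vector has the form `x + ξ y` with `x, y` in a copy of `√2 E₈`, where the rotation `ξ` of
order three fixes the sublattice `√2 A₂` pointwise and `(u, ξ w) = -(u, w) / 2` for `u, w` in its
orthogonal complement `√2 E₆`. Writing `x_A, x_E` for the components of `x / √2`, an element of
`E₈`, in the spans of `A₂` and `E₆`, and similarly for `y`,
`|x + ξ y|² = 2 |x_A + y_A|² + |x_E|² + |y_E|² + |x_E - y_E|²`.
This gives positive definiteness. Moreover `x_E, y_E` lie in `E₆*`, whose nonzero norms are at
least `4/3`, and if one of `x_E, y_E, x_E - y_E` is nonzero, then at least two are, so that they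
contribute at least `8/3`. If all vanish, then `x_A + y_A ∈ A₂` and the norm is a multiple of `4`.
Hence no vector has norm `2`.
-/

open Matrix

/-- The 14×14 Gram matrix of the lattice `DIH6(12)` from the paper, with respect to the
basis `γ1, γ2, γ3, …, γ8, γ3ξ, …, γ8ξ`. -/
def DIH6_12Gram : Matrix (Fin 14) (Fin 14) ℤ :=
  !![ 4,-2, 0, 0, 0, 0, 0, 0, 0, 0, 0, 0, 0, 0;
     -2, 4,-2, 0, 0, 0,-2, 0,-2, 0, 0, 0, 2, 0;
      0,-2, 4,-2, 0, 0, 0, 0, 0, 1, 0, 0,-2, 0;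
      0, 0,-2, 4,-2, 0, 0, 0, 1,-2, 1, 0, 0, 0;
      0, 0, 0,-2, 4,-2, 0, 0, 0, 1,-2, 1, 0, 0;
      0, 0, 0, 0,-2, 4, 0, 0, 0, 0, 1,-2, 0, 0;
      0,-2, 0, 0, 0, 0, 4,-2, 2, 0, 0, 0, 0, 1;
      0, 0, 0, 0, 0, 0,-2, 4, 0, 0, 0, 0,-1,-2;
      0,-2, 0, 1, 0, 0, 2, 0, 4,-2, 0, 0, 0, 0;
      0, 0, 1,-2, 1, 0, 0, 0,-2, 4,-2, 0, 0, 0;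
      0, 0, 0, 1,-2, 1, 0, 0, 0,-2, 4,-2, 0, 0;
      0, 0, 0, 0, 1,-2, 0, 0, 0, 0,-2, 4, 0, 0;
      0, 2,-2, 0, 0, 0, 0,-1, 0, 0, 0, 0, 4, 2;
      0, 0, 0, 0, 0, 0, 1,-2, 0, 0, 0, 0, 2, 4]

section General

variable {n R : Type*} [Fintype n] [CommRing R]

theorem even_dotProduct_mulVec_self {A : Matrix n n R} (hA : A.IsSymm)
    (hdiag : ∀ i, Even (A i i)) (v : n → R) : Even (v ⬝ᵥ A *ᵥ v) := by
  classical
  have even_add (u w : n → R) (hu : Even (u ⬝ᵥ A *ᵥ u)) (hw : Even (w ⬝ᵥ A *ᵥ w)) :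
      Even ((u + w) ⬝ᵥ A *ᵥ (u + w)) := by
    have cross : w ⬝ᵥ A *ᵥ u = u ⬝ᵥ A *ᵥ w := by
      rw [dotProduct_mulVec, ← mulVec_transpose, hA.eq, dotProduct_comm]
    have expand : (u + w) ⬝ᵥ A *ᵥ (u + w) =
        u ⬝ᵥ A *ᵥ u + w ⬝ᵥ A *ᵥ w + 2 * (u ⬝ᵥ A *ᵥ w) := by
      rw [mulVec_add, add_dotProduct, dotProduct_add, dotProduct_add, cross]
      ring
    rw [expand]
    exact (hu.add hw).add (even_two_mul _)
  rw [← Finset.univ_sum_single v]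
  refine Finset.sum_induction _ (fun u ↦ Even (u ⬝ᵥ A *ᵥ u)) even_add (by simp) fun i _ ↦ ?_
  simp [hdiag i]

theorem associated_det_mul_mul [DecidableEq n] {U W : Matrix n n R} (hU : IsUnit U.det)
    (hW : IsUnit W.det) (A : Matrix n n R) : Associated A.det (U * A * W).det := by
  rw [det_mul, det_mul]
  exact (associated_unit_mul_right _ _ hU).trans (associated_mul_unit_right _ _ hW)

end General

/-- The quadratic form `a² + ab + b²`. A vector of `A₂*` whose inner products with two simple roots
of `A₂` are `a` and `b` has norm `2/3` times this value. -/
def hexagonalForm {R : Type*} [CommRing R] (w : Fin 2 → R) : R :=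
  w 0 ^ 2 + w 0 * w 1 + w 1 ^ 2

/-- `3/2` times the norm form of `E₆*`, in the basis of projections of the simple roots
`γ3, …, γ8` of `E₈` to the orthogonal complement of the copy of `A₂` spanned by `γ1, γ2`. The first
bracket is half the norm in `E₈`, for the chains `γ3, …, γ6` and `γ7, γ8`; the subtracted square is
the contribution of the projection to `A₂`, since `γ3` and `γ7` are the roots joined to `γ2` and
none is joined to `γ1`. -/
def e6DualForm {R : Type*} [CommRing R] (z : Fin 6 → R) : R :=
  3 * (z 0 ^ 2 - z 0 * z 1 + z 1 ^ 2 - z 1 * z 2 + z 2 ^ 2 - z 2 * z 3 + z 3 ^ 2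
    + (z 4 ^ 2 - z 4 * z 5 + z 5 ^ 2)) - (z 0 + z 4) ^ 2

section OrderedRing

variable {R : Type*} [CommRing R] [LinearOrder R] [IsStrictOrderedRing R]

theorem hexagonalForm_pos {w : Fin 2 → R} (hw : w ≠ 0) : 0 < hexagonalForm w := by
  contrapose! hw
  have sum_sq : 4 * hexagonalForm w = (2 * w 0 + w 1) ^ 2 + 3 * w 1 ^ 2 := by
    unfold hexagonalForm
    ring
  obtain ⟨h0, h1⟩ : (2 * w 0 + w 1) ^ 2 ≤ 0 ∧ w 1 ^ 2 ≤ 0 := by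
    constructor <;> linarith [sq_nonneg (2 * w 0 + w 1), sq_nonneg (w 1)]
  rw [sq_nonpos_iff] at h0 h1
  ext i
  fin_cases i <;> simp only [Fin.zero_eta, Fin.mk_one, Pi.zero_apply] <;> linarith

theorem hexagonalForm_nonneg (w : Fin 2 → R) : 0 ≤ hexagonalForm w := by
  obtain rfl | hw := eq_or_ne w 0
  · simp [hexagonalForm]
  · exact (hexagonalForm_pos hw).le

theorem e6DualForm_pos {z : Fin 6 → R} (hz : z ≠ 0) : 0 < e6DualForm z := by
  contrapose! hz
  -- Complete squares along each chain of the Dynkin diagram, from its far end inwards.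
  have sum_sq : 56 * e6DualForm z = 42 * (2 * z 3 - z 2) ^ 2 + 14 * (3 * z 2 - 2 * z 1) ^ 2
      + 7 * (4 * z 1 - 3 * z 0) ^ 2 + 42 * (2 * z 5 - z 4) ^ 2 + (7 * z 0 - 8 * z 4) ^ 2
      + 6 * z 4 ^ 2 := by
    unfold e6DualForm
    ring
  obtain ⟨h3, h2, h1, h5, h0, h4⟩ : (2 * z 3 - z 2) ^ 2 ≤ 0 ∧ (3 * z 2 - 2 * z 1) ^ 2 ≤ 0 ∧
      (4 * z 1 - 3 * z 0) ^ 2 ≤ 0 ∧ (2 * z 5 - z 4) ^ 2 ≤ 0 ∧ (7 * z 0 - 8 * z 4) ^ 2 ≤ 0 ∧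
      z 4 ^ 2 ≤ 0 := by
    refine ⟨?_, ?_, ?_, ?_, ?_, ?_⟩ <;>
      linarith [sq_nonneg (2 * z 3 - z 2), sq_nonneg (3 * z 2 - 2 * z 1),
        sq_nonneg (4 * z 1 - 3 * z 0), sq_nonneg (2 * z 5 - z 4),
        sq_nonneg (7 * z 0 - 8 * z 4), sq_nonneg (z 4)]
  rw [sq_nonpos_iff] at h0 h1 h2 h3 h4 h5
  ext i
  fin_cases i <;> simp only [Fin.zero_eta, Fin.mk_one, Fin.reduceFinMk, Pi.zero_apply] <;> linarith

theorem e6DualForm_nonneg (z : Fin 6 → R) : 0 ≤ e6DualForm z := by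
  obtain rfl | hz := eq_or_ne z 0
  · simp [e6DualForm]
  · exact (e6DualForm_pos hz).le

end OrderedRing

theorem e6DualForm_ne_one (z : Fin 6 → ℤ) : e6DualForm z ≠ 1 := by
  intro h
  have neg_sq_ne_one : ∀ s : ZMod 3, -s ^ 2 ≠ 1 := by decide
  have h_mod := congrArg (Int.cast : ℤ → ZMod 3) h
  simp only [e6DualForm, Int.cast_sub, Int.cast_mul, Int.cast_pow, Int.cast_one] at h_mod
  rw [show ((3 : ℤ) : ZMod 3) = 0 from rfl, zero_mul, zero_sub] at h_mod
  exact neg_sq_ne_one _ h_mod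

theorem two_le_e6DualForm {z : Fin 6 → ℤ} (hz : z ≠ 0) : 2 ≤ e6DualForm z := by
  have h_pos := e6DualForm_pos hz
  have h_ne := e6DualForm_ne_one z
  lia

theorem four_le_e6DualForm_add_add_sub {x y : Fin 6 → ℤ} (h : x ≠ 0 ∨ y ≠ 0) :
    4 ≤ e6DualForm x + e6DualForm y + e6DualForm (x - y) := by
  have hx_nonneg := e6DualForm_nonneg x
  have hy_nonneg := e6DualForm_nonneg y
  have hxy_nonneg := e6DualForm_nonneg (x - y)
  by_cases hx : x = 0
  · have hy : y ≠ 0 := h.resolve_left (not_not_intro hx)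
    have hxy : x - y ≠ 0 := by simpa [hx] using hy
    linarith [two_le_e6DualForm hy, two_le_e6DualForm hxy]
  · by_cases hy : y = 0
    · have hxy : x - y ≠ 0 := by simpa [hy] using hx
      linarith [two_le_e6DualForm hx, two_le_e6DualForm hxy]
    · linarith [two_le_e6DualForm hx, two_le_e6DualForm hy]

namespace DIH6_12Gram

section Coordinates

variable {R : Type*} [CommRing R]

/-- The `E₆`-coordinates of `x`, for the lattice vector `x + ξ y` with coordinate vector `v`. -/
def e6Left (v : Fin 14 → R) : Fin 6 → R :=
  ![v 2, v 3, v 4, v 5, v 6, v 7]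

/-- The `E₆`-coordinates of `y`, for the lattice vector `x + ξ y` with coordinate vector `v`. The
sign is there because the row and column `γ7ξ` of the matrix belong to `-ξ γ7`. -/
def e6Right (v : Fin 14 → R) : Fin 6 → R :=
  ![v 8, v 9, v 10, v 11, -v 12, v 13]

/-- The inner products of `x + y` with `γ1` and `γ2`, halved, for the lattice vector `x + ξ y` with
coordinate vector `v`; they determine the projection of `x + y` to `A₂`. -/
def a2Part (v : Fin 14 → R) : Fin 2 → R :=
  ![2 * v 0 - v 1, 2 * v 1 - v 0 - (v 2 + v 6 + v 8 - v 12)]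

theorem three_mul_norm_eq (v : Fin 14 → R) :
    3 * (v ⬝ᵥ DIH6_12Gram.map (Int.cast : ℤ → R) *ᵥ v) = 4 * hexagonalForm (a2Part v) +
      2 * (e6DualForm (e6Left v) + e6DualForm (e6Right v) + e6DualForm (e6Left v - e6Right v)) := by
  simp only [dotProduct, mulVec, DIH6_12Gram, hexagonalForm, e6DualForm, a2Part, e6Left, e6Right,
    map_apply, Pi.sub_apply, of_apply, cons_val', cons_val_fin_one, cons_val_zero, cons_val_one,
    cons_val_succ, cons_val, Fin.sum_univ_succ, Fin.isValue, Fin.succ_zero_eq_one,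
    Fin.succ_one_eq_two, Fin.reduceSucc, Finset.univ_unique, Fin.default_eq_zero,
    Finset.sum_singleton, Int.cast_ofNat, Int.cast_neg, Int.cast_zero, Int.cast_one]
  ring

end Coordinates

section OrderedRing

variable {R : Type*} [CommRing R] [LinearOrder R] [IsStrictOrderedRing R]

theorem eq_zero_of_coordinates_eq_zero {v : Fin 14 → R} (ha : a2Part v = 0) (hx : e6Left v = 0)
    (hy : e6Right v = 0) : v = 0 := by
  simp only [a2Part, e6Left, e6Right, cons_eq_zero_iff, neg_eq_zero] at ha hx hy
  obtain ⟨ha0, ha1, -⟩ := ha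
  obtain ⟨h2, h3, h4, h5, h6, h7, -⟩ := hx
  obtain ⟨h8, h9, h10, h11, h12, h13, -⟩ := hy
  have h0 : v 0 = 0 := by linarith
  have h1 : v 1 = 0 := by linarith
  ext i
  fin_cases i <;> assumption

theorem norm_pos {v : Fin 14 → R} (hv : v ≠ 0) :
    0 < v ⬝ᵥ DIH6_12Gram.map (Int.cast : ℤ → R) *ᵥ v := by
  have h := three_mul_norm_eq v
  have ha_nonneg := hexagonalForm_nonneg (a2Part v)
  have hx_nonneg := e6DualForm_nonneg (e6Left v)
  have hy_nonneg := e6DualForm_nonneg (e6Right v)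
  have hxy_nonneg := e6DualForm_nonneg (e6Left v - e6Right v)
  by_cases hx : e6Left v = 0
  · by_cases hy : e6Right v = 0
    · have ha : a2Part v ≠ 0 := fun ha ↦ hv (eq_zero_of_coordinates_eq_zero ha hx hy)
      linarith [hexagonalForm_pos ha]
    · linarith [e6DualForm_pos hy]
  · linarith [e6DualForm_pos hx]

end OrderedRing

theorem isSymm : DIH6_12Gram.IsSymm :=
  show DIH6_12Gramᵀ = DIH6_12Gram by decide +kernel

theorem posDef : (DIH6_12Gram.map (Int.cast : ℤ → ℝ)).PosDef :=
  .of_dotProduct_mulVec_pos ((conjTranspose_eq_transpose_of_trivial _).trans (isSymm.map _))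
    fun _ hv ↦ norm_pos hv

theorem even_norm (v : Fin 14 → ℤ) : Even (v ⬝ᵥ DIH6_12Gram *ᵥ v) :=
  even_dotProduct_mulVec_self isSymm (by decide +kernel) v

theorem norm_ne_two (v : Fin 14 → ℤ) : v ⬝ᵥ DIH6_12Gram *ᵥ v ≠ 2 := by
  intro h_two
  have h := three_mul_norm_eq v
  rw [show DIH6_12Gram.map (Int.cast : ℤ → ℤ) = DIH6_12Gram from map_id _, h_two] at h
  by_cases hxy : e6Left v = 0 ∧ e6Right v = 0
  · obtain ⟨hx, hy⟩ := hxy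
    have e6DualForm_zero : e6DualForm (0 : Fin 6 → ℤ) = 0 := by simp [e6DualForm]
    rw [hx, hy, sub_zero, e6DualForm_zero] at h
    lia
  · have h_le := four_le_e6DualForm_add_add_sub (not_and_or.1 hxy)
    linarith [hexagonalForm_nonneg (a2Part v)]

/-- The diagonal `1⁹ 3³ 6²` of the Smith normal form. -/
def invariantFactor (i : Fin 14) : ℤ :=
  if (i : ℕ) < 9 then 1 else if (i : ℕ) < 12 then 3 else 6

/-- The row transformation bringing `DIH6_12Gram` to Smith normal form: its last five rows span the
left kernel of `DIH6_12Gram` modulo `3`, and its last two rows the left kernel modulo `2`. -/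
def smithLeft : Matrix (Fin 14) (Fin 14) ℤ :=
  !![-1,-2,-1,-1, 0, 0,-1, 0,-1,-1, 0, 0, 1, 0;
     -3,-5,-3,-2,-2,-1,-3,-1,-1, 0, 0, 0, 1, 0;
      0, 1, 0, 0, 1, 1, 0, 0, 0, 0, 1, 0, 0, 0;
     -2,-5,-1,-1, 0, 0, 0,-1,-3,-3,-2,-1, 2,-2;
      1,-1, 0, 0, 1, 0, 0, 0, 0,-1,-1, 0, 0, 0;
      0, 0, 0, 0, 0, 0, 1, 0, 0, 0, 0, 0,-1, 0;
      0,-1,-1,-1, 0, 0, 0,-1, 0,-1,-1,-1, 0,-1;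
      0, 0, 1, 1, 1, 1, 1, 0,-1,-1,-1,-1, 1,-1;
     -1, 0, 0, 0,-1, 0,-1, 1,-1, 0, 0, 0, 1, 1;
      0, 0,-2,-1, 0, 1,-1,-2, 2, 1, 0,-1,-1,-1;
      0, 0, 1, 1, 1, 1, 2, 0,-1,-1,-1,-1,-1, 0;
      0, 0, 0, 0,-1, 1, 0, 0, 0, 0,-2,-1, 0, 0;
      0, 3, 0, 0, 0, 2, 0, 0, 0, 0, 0,-2, 0, 0;
      3, 0, 0,-2, 2, 0, 0, 0, 0,-4,-2, 0, 0, 0]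

/-- The column transformation bringing `DIH6_12Gram` to Smith normal form: its last five columns
span the kernel of `DIH6_12Gram` modulo `3`, and its last two columns the kernel modulo `2`. -/
def smithRight : Matrix (Fin 14) (Fin 14) ℤ :=
  !![-1,-3, 0,-2, 0, 0,-1,-1,-1, 0, 0, 0, 3, 0;
     -3,-5, 1,-5,-1, 1,-1, 0,-1, 0, 0, 0, 0, 3;
     -1,-2, 0,-2,-1, 0,-1, 2,-1,-2, 0, 0, 0, 2;
     -1,-2, 0,-1, 0, 0,-1, 1, 0, 0, 0,-1, 0, 0;
     -1,-1, 1,-1, 0, 0, 0, 1, 0,-1, 0, 0,-2, 0;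
      0,-1, 0, 0, 0, 0,-1, 0, 0, 1, 0, 0, 0, 0;
      0,-3, 0,-1, 0, 0, 0, 0, 0,-1, 0, 0, 0,-2;
      0,-1, 0,-1, 0, 1, 0, 1, 0,-1,-1, 0, 0, 0;
     -1,-1, 0,-3,-1, 1,-1, 0,-1, 2, 0, 0, 0, 4;
     -1,-1, 1,-2, 0, 0, 0,-1,-1, 0, 0, 1, 0, 0;
      0,-1, 0,-1, 0, 0,-1,-1,-1, 1, 0, 0, 2, 0;
      0,-1, 0, 0, 0, 0,-1,-1, 0, 2, 0, 0, 0, 0;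
      2, 1,-1, 2, 0,-1, 0, 1, 0,-1, 0, 0, 0,-2;
      0,-1, 0,-1, 0, 0, 0,-1, 0, 1, 1, 0, 0, 0]

theorem smithLeft_mul_mul_smithRight :
    smithLeft * DIH6_12Gram * smithRight = diagonal invariantFactor := by
  decide +kernel

-- `U * G * W = D` forces `U⁻¹ = G * W * D⁻¹`, so the divisions below are exact.
theorem isUnit_det_smithLeft : IsUnit smithLeft.det :=
  isUnit_det_of_right_inverse
    (B := of fun i j ↦ (DIH6_12Gram * smithRight) i j / invariantFactor j) (by decide +kernel)

theorem isUnit_det_smithRight : IsUnit smithRight.det :=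
  isUnit_det_of_left_inverse
    (B := of fun i j ↦ (smithLeft * DIH6_12Gram) i j / invariantFactor i) (by decide +kernel)

theorem det_eq : DIH6_12Gram.det = 972 := by
  have h_assoc : Associated DIH6_12Gram.det 972 := by
    have h := associated_det_mul_mul isUnit_det_smithLeft isUnit_det_smithRight DIH6_12Gram
    rwa [smithLeft_mul_mul_smithRight, det_diagonal,
      show ∏ i, invariantFactor i = 972 by decide +kernel] at h
  have h_pos : 0 < DIH6_12Gram.det := by
    have h : 0 < (DIH6_12Gram.map (Int.castRingHom ℝ)).det := posDef.det_pos
    rwa [← RingHom.mapMatrix_apply, ← RingHom.map_det, eq_intCast, Int.cast_pos] at h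
  exact Int.eq_of_associated_of_nonneg h_assoc h_pos.le (by norm_num)

end DIH6_12Gram

/-- The 14×14 Gram matrix of `DIH6(12)` is positive definite and even, the
corresponding lattice is rootless, and its Smith normal form has invariant factors
`1,1,1,1,1,1,1,1,1,3,3,3,6,6` (so the determinant is `3³·6² = 972`). -/
theorem DIH6_12_properties :
    (DIH6_12Gram.map (Int.cast : ℤ → ℝ)).PosDef ∧
    (∀ v : Fin 14 → ℤ, Even (v ⬝ᵥ DIH6_12Gram.mulVec v)) ∧
    (∀ v : Fin 14 → ℤ, v ⬝ᵥ DIH6_12Gram.mulVec v ≠ 2) ∧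
    DIH6_12Gram.det = 972 ∧
    (∃ U W : Matrix (Fin 14) (Fin 14) ℤ, IsUnit U.det ∧ IsUnit W.det ∧
      U * DIH6_12Gram * W = Matrix.diagonal
        (fun i : Fin 14 => if (i : ℕ) < 9 then (1 : ℤ) else if (i : ℕ) < 12 then 3 else 6)) :=
  ⟨DIH6_12Gram.posDef, DIH6_12Gram.even_norm, DIH6_12Gram.norm_ne_two, DIH6_12Gram.det_eq,
    DIH6_12Gram.smithLeft, DIH6_12Gram.smithRight, DIH6_12Gram.isUnit_det_smithLeft,
    DIH6_12Gram.isUnit_det_smithRight, DIH6_12Gram.smithLeft_mul_mul_smithRight⟩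
end

section
/- For the Barnes–Wall lattice BW16 (even lattice of rank 16, minimal norm 4, determinant 2^8): BW16 is rootless and its discriminant group is (ℤ/2ℤ)^8, matching the entry DIH8(16,0) in the classification. -/
open Matrix

/-- The first-order Reed–Muller code `RM(1,4) ≤ 𝔽₂^16`, spanned by the all-ones word and
the four coordinate functions of `𝔽₂⁴ ≅ Fin 16`. -/
def RM14 : Submodule (ZMod 2) (Fin 16 → ZMod 2) :=
  Submodule.span (ZMod 2)
    ({fun _ => 1} ∪ Set.range fun (i : Fin 4) (j : Fin 16) =>
      if (j : ℕ).testBit (i : ℕ) then 1 else 0)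

/-- Membership in (the `√2`-rescaled copy of) the Barnes–Wall lattice `BW16`, realized by
Construction B applied to `RM(1,4)`: integer vectors reducing mod 2 to a codeword of
`RM(1,4)` and with coordinate sum divisible by 4.  The `BW16` norm of such `x` is
`(x ⬝ x)/2`. -/
def memBW16 (x : Fin 16 → ℤ) : Prop :=
  (fun j => (x j : ZMod 2)) ∈ RM14 ∧ (4 : ℤ) ∣ ∑ j, x j

/-!
Write `L` for the Construction B lattice of a binary code `C` of length `n` and dimension `k`.
It has index `2 ^ (n - k + 1)` in `ℤⁿ` when `C` is even, so a Gram matrix for half the dot product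
has determinant `2 ^ (n - 2 * k + 2)`. If moreover `C` contains the all-ones word and `4 ∣ n`, then
`4 L* ⊆ L` for the dual `L*` under the dot product: by biduality for codes, membership of `4 φ` in
`L` reduces to the integrality of `φ` on `2 h`, with `h` a lift of a word of the dual code, and on
the all-ones vector, both of which lie in `L`. Hence the discriminant group is killed by `2`, and
its order determines it. For the norms, a vector has at least as large a norm as the weight of its
reduction mod `2`, and is congruent to it mod `4`. What is special to `BW16` is only that all the
nonzero words of `RM(1,4)` have weight `8` or `16`.
-/

section Lattice

open Module

theorem nonempty_linearEquiv_fin_of_natCard_eq_pow {K V : Type*} [Field K] [Finite K]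
    [AddCommGroup V] [Module K V] {m : ℕ} (hcard : Nat.card V = Nat.card K ^ m) :
    Nonempty (V ≃ₗ[K] (Fin m → K)) := by
  have : Finite V := Nat.finite_of_card_ne_zero (hcard ▸ pow_ne_zero m Nat.card_pos.ne')
  have hrank : finrank K V = m :=
    Nat.pow_right_injective (Finite.one_lt_card (α := K))
      (natCard_eq_pow_finrank.symm.trans hcard)
  exact ⟨(finBasisOfFinrankEq K V hrank).equivFun⟩

theorem nonempty_addEquiv_fin_zmod {A : Type*} [AddCommGroup A] {p m : ℕ} [Fact p.Prime]
    (hp : ∀ a : A, p • a = 0) (hcard : Nat.card A = p ^ m) :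
    Nonempty (A ≃+ (Fin m → ZMod p)) := by
  let : Module (ZMod p) A := AddCommGroup.zmodModule hp
  have hcard_pow : Nat.card A = Nat.card (ZMod p) ^ m := by rw [hcard, Nat.card_zmod]
  exact (nonempty_linearEquiv_fin_of_natCard_eq_pow hcard_pow).map LinearEquiv.toAddEquiv

theorem exists_basis_coe_eq_of_span_eq {R M ι : Type*} [Ring R] [AddCommGroup M] [Module R M]
    {v : ι → M} {N : Submodule R M} (hv : LinearIndependent R v)
    (hspan : Submodule.span R (Set.range v) = N) :
    ∃ b : Basis ι R N, ∀ i, (b i : M) = v i := by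
  subst hspan
  exact ⟨Basis.span hv, fun i => congrArg Subtype.val (Basis.span_apply hv i)⟩

variable {ι : Type*} [Fintype ι]

theorem natCard_quotient_range_mulVecLin [DecidableEq ι] {G : Matrix ι ι ℤ} (hG : G.det ≠ 0) :
    Nat.card ((ι → ℤ) ⧸ LinearMap.range G.mulVecLin) = G.det.natAbs := by
  have hinj : Function.Injective G.mulVecLin :=
    mulVec_injective_of_det_ne_zero hG
  rw [← Submodule.natAbs_det_equiv _ (LinearEquiv.ofInjective G.mulVecLin hinj),
    ← LinearMap.det_toLin']
  rfl

theorem nonempty_quotient_range_mulVecLin_addEquiv [DecidableEq ι] {p m : ℕ} [Fact p.Prime]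
    {G : Matrix ι ι ℤ} (hdet : G.det = p ^ m) (hp : ∀ v, p • v ∈ LinearMap.range G.mulVecLin) :
    Nonempty (((ι → ℤ) ⧸ LinearMap.range G.mulVecLin) ≃+ (Fin m → ZMod p)) := by
  have hdet_ne_zero : G.det ≠ 0 := by
    rw [hdet]
    exact_mod_cast pow_ne_zero m (Fact.out : p.Prime).ne_zero
  refine nonempty_addEquiv_fin_zmod (fun a => ?_) ?_
  · obtain ⟨v, rfl⟩ := Submodule.Quotient.mk_surjective _ a
    exact (Submodule.Quotient.mk_eq_zero _).mpr (hp v)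
  · rw [natCard_quotient_range_mulVecLin hdet_ne_zero, hdet]
    simp

variable {L : Submodule ℤ (ι → ℤ)} (b : Basis ι ℤ L) {G : Matrix ι ι ℤ} {c : ℤ}

theorem pow_card_mul_det_eq_index_sq [DecidableEq ι]
    (hG : ∀ i j, c * G i j = (b i : ι → ℤ) ⬝ᵥ (b j : ι → ℤ)) :
    c ^ Fintype.card ι * G.det = (L.toAddSubgroup.index : ℤ) ^ 2 := by
  let B : Matrix ι ι ℤ := Matrix.of fun i => b i
  have hindex : L.toAddSubgroup.index = B.det.natAbs := by
    rw [AddSubgroup.index_eq_natAbs_det (Pi.basisFun ℤ ι) L.toAddSubgroup b,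
      Pi.basisFun_det_apply]
  have hGram : c • G = B * Bᵀ := Matrix.ext hG
  rw [← det_smul, hGram, det_mul, det_transpose, hindex, Int.natAbs_sq, sq]

theorem smul_mem_range_mulVecLin_of_dual (hc : c ≠ 0) {d : ℤ}
    (hG : ∀ i j, c * G i j = (b i : ι → ℤ) ⬝ᵥ (b j : ι → ℤ))
    (hdual : ∀ φ : L →ₗ[ℤ] ℤ, ∃ x : L, ∀ y : L, (x : ι → ℤ) ⬝ᵥ y = c * d * φ y) (v : ι → ℤ) :
    d • v ∈ LinearMap.range G.mulVecLin := by
  obtain ⟨x, hx⟩ := hdual (b.constr ℤ v)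
  have hcoords : ∑ j, b.repr x j • (b j : ι → ℤ) = x := by
    simpa only [map_sum, map_smul, Submodule.subtype_apply] using
      congrArg L.subtype (b.sum_repr x)
  refine ⟨b.repr x, funext fun i => mul_left_cancel₀ hc ?_⟩
  calc c * (G *ᵥ b.repr x) i = ∑ j, c * G i j * b.repr x j := by
        simp only [mulVec, dotProduct, Finset.mul_sum, mul_assoc]
    _ = (b i : ι → ℤ) ⬝ᵥ ∑ j, b.repr x j • (b j : ι → ℤ) := by
        simp only [hG, dotProduct_sum, dotProduct_smul, smul_eq_mul, mul_comm]
    _ = c * (d • v) i := by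
        rw [hcoords, dotProduct_comm, hx, b.constr_basis, Pi.smul_apply, smul_eq_mul, mul_assoc]

end Lattice

section Reduction

variable {ι : Type*}

/-- Coordinatewise reduction mod `2` of an integer vector. -/
def reduceModTwo : (ι → ℤ) →+ (ι → ZMod 2) :=
  (Int.castAddHom (ZMod 2)).compLeft ι

theorem reduceModTwo_surjective : Function.Surjective (reduceModTwo (ι := ι)) :=
  ZMod.intCast_surjective.comp_left

theorem reduceModTwo_eq_zero_iff {x : ι → ℤ} : reduceModTwo x = 0 ↔ ∃ z, x = (2 : ℤ) • z := by
  refine ⟨fun h => ?_, ?_⟩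
  · have hdvd (i : ι) : (2 : ℤ) ∣ x i := (ZMod.intCast_zmod_eq_zero_iff_dvd _ 2).mp (congrFun h i)
    choose z hz using hdvd
    exact ⟨z, funext hz⟩
  · rintro ⟨z, rfl⟩
    rw [map_zsmul]
    exact ZModModule.char_nsmul_eq_zero 2 _

theorem reduceModTwo_one : reduceModTwo (1 : ι → ℤ) = 1 :=
  funext fun _ => Int.cast_one

variable [Fintype ι]

theorem reduceModTwo_dotProduct_eq_zero_iff {x y : ι → ℤ} :
    reduceModTwo x ⬝ᵥ reduceModTwo y = 0 ↔ 2 ∣ x ⬝ᵥ y := by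
  have hcast : reduceModTwo x ⬝ᵥ reduceModTwo y = ((x ⬝ᵥ y : ℤ) : ZMod 2) :=
    (RingHom.map_dotProduct (Int.castRingHom (ZMod 2)) x y).symm
  rw [hcast]
  exact ZMod.intCast_zmod_eq_zero_iff_dvd _ 2

theorem natCast_hammingNorm_reduceModTwo (x : ι → ℤ) :
    (hammingNorm (reduceModTwo x) : ℤ) = ∑ i, x i % 2 := by
  rw [hammingNorm, Finset.natCast_card_filter]
  refine Finset.sum_congr rfl fun i _ => ?_
  have hodd : reduceModTwo x i ≠ 0 ↔ Odd (x i) :=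
    ZMod.intCast_eq_zero_iff_even.not.trans Int.not_even_iff_odd
  simp only [hodd, Int.odd_iff]
  grind

theorem sum_modEq_hammingNorm_reduceModTwo (x : ι → ℤ) :
    ∑ i, x i ≡ hammingNorm (reduceModTwo x) [ZMOD 2] := by
  rw [natCast_hammingNorm_reduceModTwo]
  exact Int.ModEq.sum fun i _ => (Int.mod_modEq _ _).symm

theorem dotProduct_self_modEq_hammingNorm_reduceModTwo (x : ι → ℤ) :
    x ⬝ᵥ x ≡ hammingNorm (reduceModTwo x) [ZMOD 4] := by
  rw [natCast_hammingNorm_reduceModTwo]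
  refine Int.ModEq.sum fun i _ => ?_
  obtain ⟨k, hk | hk⟩ := Int.even_or_odd' (x i)
  · refine (Int.modEq_iff_dvd.mpr ⟨k * k, ?_⟩).symm
    rw [hk, Int.mul_emod_right]
    ring
  · refine (Int.modEq_iff_dvd.mpr ⟨k * k + k, ?_⟩).symm
    rw [hk, Int.mul_add_emod_self_left]
    ring

theorem hammingNorm_reduceModTwo_le_dotProduct_self (x : ι → ℤ) :
    (hammingNorm (reduceModTwo x) : ℤ) ≤ x ⬝ᵥ x := by
  rw [natCast_hammingNorm_reduceModTwo]
  refine Finset.sum_le_sum fun i _ => ?_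
  rcases eq_or_ne (x i) 0 with hi | hi
  · simp [hi]
  · calc x i % 2 ≤ 1 := Int.le_of_lt_add_one (Int.emod_lt_of_pos (x i) (by norm_num))
      _ ≤ x i * x i := mul_self_pos.mpr hi

end Reduction

section ConstructionB

open Module

variable {ι : Type*}

theorem mem_of_forall_dotProduct_eq_zero {K : Type*} [Field K] [Fintype ι]
    {C : Submodule K (ι → K)} {v : ι → K}
    (h : ∀ u, (∀ c ∈ C, u ⬝ᵥ c = 0) → u ⬝ᵥ v = 0) : v ∈ C := by
  classical
  by_contra hv
  obtain ⟨f, hfv, hfC⟩ := Submodule.exists_le_ker_of_notMem hv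
  obtain ⟨u, rfl⟩ := (dotProductEquiv K ι).surjective f
  exact hfv (h u hfC)

/-- The Construction A lattice of a binary code: the integer vectors reducing mod `2` to a
codeword. -/
def constructionA (C : Submodule (ZMod 2) (ι → ZMod 2)) : AddSubgroup (ι → ℤ) :=
  C.toAddSubgroup.comap reduceModTwo

variable [Fintype ι]

/-- The Construction B lattice of a binary code, rescaled by `√2` so as to consist of integer
vectors: the vectors of the Construction A lattice with coordinate sum divisible by `4`. -/
def constructionB (C : Submodule (ZMod 2) (ι → ZMod 2)) : Submodule ℤ (ι → ℤ) where
  carrier := {x | reduceModTwo x ∈ C ∧ 4 ∣ ∑ i, x i}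
  zero_mem' := by simp
  add_mem' {x y} hx hy := by
    refine ⟨?_, ?_⟩
    · rw [map_add]
      exact add_mem hx.1 hy.1
    · simpa only [Pi.add_apply, Finset.sum_add_distrib] using dvd_add hx.2 hy.2
  smul_mem' a x hx := by
    refine ⟨?_, ?_⟩
    · rw [map_zsmul]
      exact zsmul_mem hx.1 a
    · simpa only [Pi.smul_apply, smul_eq_mul, ← Finset.mul_sum] using hx.2.mul_left a

variable {C : Submodule (ZMod 2) (ι → ZMod 2)} {x : ι → ℤ}

theorem mem_constructionB : x ∈ constructionB C ↔ reduceModTwo x ∈ C ∧ 4 ∣ ∑ i, x i :=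
  Iff.rfl

theorem two_smul_mem_constructionB_iff : (2 : ℤ) • x ∈ constructionB C ↔ 2 ∣ ∑ i, x i := by
  have hred : reduceModTwo ((2 : ℤ) • x) ∈ C :=
    reduceModTwo_eq_zero_iff.mpr ⟨x, rfl⟩ ▸ zero_mem C
  simp only [mem_constructionB, hred, true_and, Pi.smul_apply, smul_eq_mul, ← Finset.mul_sum]
  omega

theorem four_smul_mem_constructionB (x : ι → ℤ) : (4 : ℤ) • x ∈ constructionB C := by
  rw [show (4 : ℤ) • x = (2 : ℤ) • (2 : ℤ) • x by rw [smul_smul]; norm_num,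
    two_smul_mem_constructionB_iff]
  simp [← Finset.mul_sum]

theorem one_mem_constructionB (hC : 1 ∈ C) (hι : 4 ∣ Fintype.card ι) :
    (1 : ι → ℤ) ∈ constructionB C :=
  ⟨reduceModTwo_one.symm ▸ hC, by simpa using mod_cast hι⟩

theorem four_dvd_dotProduct_self_of_mem_constructionB (hC : ∀ c ∈ C, 4 ∣ hammingNorm c)
    (hx : x ∈ constructionB C) : 4 ∣ x ⬝ᵥ x :=
  (dotProduct_self_modEq_hammingNorm_reduceModTwo x).dvd_iff.mpr
    (mod_cast hC _ hx.1)

theorem two_le_dotProduct_self_of_two_dvd_sum {z : ι → ℤ} (hz : z ≠ 0) (hsum : 2 ∣ ∑ i, z i) :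
    2 ≤ z ⬝ᵥ z := by
  have hpos : 0 < z ⬝ᵥ z :=
    (Finset.sum_nonneg fun i _ => mul_self_nonneg (z i)).lt_of_ne'
      (dotProduct_self_eq_zero.not.mpr hz)
  have hpar : z ⬝ᵥ z ≡ ∑ i, z i [ZMOD 2] :=
    ((dotProduct_self_modEq_hammingNorm_reduceModTwo z).of_dvd (by norm_num)).trans
      (sum_modEq_hammingNorm_reduceModTwo z).symm
  have := (hpar.dvd_iff).mpr hsum
  omega

theorem eight_le_dotProduct_self_of_mem_constructionB (hC : ∀ c ∈ C, c ≠ 0 → 8 ≤ hammingNorm c)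
    (hx : x ∈ constructionB C) (hx0 : x ≠ 0) : 8 ≤ x ⬝ᵥ x := by
  by_cases hred : reduceModTwo x = 0
  · obtain ⟨z, rfl⟩ := reduceModTwo_eq_zero_iff.mp hred
    have hz : 2 ≤ z ⬝ᵥ z := two_le_dotProduct_self_of_two_dvd_sum (by rintro rfl; simp at hx0)
      (two_smul_mem_constructionB_iff.mp hx)
    simp only [smul_dotProduct, dotProduct_smul, smul_eq_mul]
    linarith
  · calc (8 : ℤ) ≤ hammingNorm (reduceModTwo x) := mod_cast hC _ hx.1 hred
      _ ≤ x ⬝ᵥ x := hammingNorm_reduceModTwo_le_dotProduct_self x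

theorem exists_mem_constructionB_dotProduct_self_eq_eight [Nontrivial ι]
    (C : Submodule (ZMod 2) (ι → ZMod 2)) : ∃ x ∈ constructionB C, x ⬝ᵥ x = 8 := by
  classical
  obtain ⟨i, j, hij⟩ := exists_pair_ne ι
  refine ⟨(2 : ℤ) • (Pi.single i 1 + Pi.single j 1), two_smul_mem_constructionB_iff.mpr ?_, ?_⟩
  · simp [Finset.sum_add_distrib]
  · rw [smul_dotProduct, dotProduct_smul]
    simp [hij, hij.symm]

theorem pow_finrank_mul_index_constructionA (C : Submodule (ZMod 2) (ι → ZMod 2)) :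
    2 ^ finrank (ZMod 2) C * (constructionA C).index = 2 ^ Fintype.card ι := by
  rw [constructionA, AddSubgroup.index_comap_of_surjective _ reduceModTwo_surjective]
  have hC : Nat.card C.toAddSubgroup = 2 ^ finrank (ZMod 2) C := by
    have := Module.natCard_eq_pow_finrank (K := ZMod 2) (V := C)
    rwa [Nat.card_zmod] at this
  rw [← hC, AddSubgroup.card_mul_index, Nat.card_fun, Nat.card_zmod,
    Nat.card_eq_fintype_card]

theorem relIndex_constructionB_constructionA [Nonempty ι] (hC : ∀ c ∈ C, Even (hammingNorm c)) :
    (constructionB C).toAddSubgroup.relIndex (constructionA C) = 2 := by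
  classical
  obtain ⟨i⟩ := ‹Nonempty ι›
  have hA (y : ι → ℤ) : (2 : ℤ) • y ∈ constructionA C :=
    show reduceModTwo _ ∈ C from reduceModTwo_eq_zero_iff.mpr ⟨y, rfl⟩ ▸ zero_mem C
  refine AddSubgroup.relIndex_eq_two_iff_exists_notMem_and.mpr
    ⟨(2 : ℤ) • Pi.single i 1, hA _, ?_, fun x hx => ?_⟩
  · rw [Submodule.mem_toAddSubgroup, two_smul_mem_constructionB_iff]
    simp
  · have heven : 2 ∣ ∑ i, x i :=
      ((sum_modEq_hammingNorm_reduceModTwo x).dvd_iff).mpr (mod_cast (hC _ hx).two_dvd)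
    have hshift : ∑ j, (x + (2 : ℤ) • Pi.single i 1 : ι → ℤ) j = ∑ j, x j + 2 := by
      simp [Finset.sum_add_distrib, ← Finset.mul_sum]
    have hsplit : 4 ∣ ∑ j, (x + (2 : ℤ) • Pi.single i 1 : ι → ℤ) j ∨ 4 ∣ ∑ j, x j := by omega
    exact hsplit.imp (fun h => ⟨add_mem hx (hA _), h⟩) (fun h => ⟨hx, h⟩)

theorem pow_finrank_mul_index_constructionB [Nonempty ι] (hC : ∀ c ∈ C, Even (hammingNorm c)) :
    2 ^ finrank (ZMod 2) C * (constructionB C).toAddSubgroup.index =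
      2 ^ (Fintype.card ι + 1) := by
  have hle : (constructionB C).toAddSubgroup ≤ constructionA C := fun _ hx => hx.1
  rw [← AddSubgroup.relIndex_mul_index hle, relIndex_constructionB_constructionA hC, pow_succ,
    ← pow_finrank_mul_index_constructionA C]
  ring

theorem exists_mem_constructionB_dotProduct_eq (hC : 1 ∈ C) (hι : 4 ∣ Fintype.card ι)
    (φ : constructionB C →ₗ[ℤ] ℤ) :
    ∃ x : constructionB C, ∀ y : constructionB C, (x : ι → ℤ) ⬝ᵥ y = 4 * φ y := by
  classical
  let ψ : (ι → ℤ) →ₗ[ℤ] ℤ := φ ∘ₗ (LinearMap.lsmul ℤ (ι → ℤ) 4).codRestrict (constructionB C)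
    four_smul_mem_constructionB
  obtain ⟨x, hx⟩ := (dotProductEquiv ℤ ι).surjective ψ
  have hxψ (y : ι → ℤ) : x ⬝ᵥ y = ψ y := LinearMap.congr_fun hx y
  have hψ (y : constructionB C) : ψ y = 4 * φ y := map_smul φ 4 y
  refine ⟨⟨x, mem_of_forall_dotProduct_eq_zero fun u hu => ?_, ?_⟩, fun y => (hxψ y).trans (hψ y)⟩
  · obtain ⟨h, rfl⟩ := reduceModTwo_surjective u
    have hsum : 2 ∣ ∑ i, h i := by
      rw [← dotProduct_one, ← reduceModTwo_dotProduct_eq_zero_iff, reduceModTwo_one]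
      exact hu 1 hC
    have hmem : (2 : ℤ) • h ∈ constructionB C := two_smul_mem_constructionB_iff.mpr hsum
    have hdot : x ⬝ᵥ h = 2 * φ ⟨(2 : ℤ) • h, hmem⟩ := by
      have := (hxψ ((2 : ℤ) • h)).trans (hψ ⟨_, hmem⟩)
      rw [dotProduct_smul, smul_eq_mul] at this
      linarith
    rw [reduceModTwo_dotProduct_eq_zero_iff, dotProduct_comm, hdot]
    exact dvd_mul_right _ _
  · rw [← dotProduct_one, hxψ, hψ ⟨1, one_mem_constructionB hC hι⟩]
    exact dvd_mul_right _ _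

theorem det_gram_constructionB [DecidableEq ι] [Nonempty ι]
    (heven : ∀ c ∈ C, Even (hammingNorm c)) {m : ℕ}
    (hm : m + 2 * finrank (ZMod 2) C = Fintype.card ι + 2)
    (b : Basis ι ℤ (constructionB C)) {G : Matrix ι ι ℤ}
    (hG : ∀ i j, 2 * G i j = (b i : ι → ℤ) ⬝ᵥ (b j : ι → ℤ)) :
    G.det = 2 ^ m := by
  have hindex : (2 : ℤ) ^ finrank (ZMod 2) C * (constructionB C).toAddSubgroup.index =
      2 ^ (Fintype.card ι + 1) := mod_cast pow_finrank_mul_index_constructionB heven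
  refine mul_left_cancel₀ (pow_ne_zero (2 * finrank (ZMod 2) C + Fintype.card ι) two_ne_zero) ?_
  calc (2 : ℤ) ^ (2 * finrank (ZMod 2) C + Fintype.card ι) * G.det
      = (2 ^ finrank (ZMod 2) C * (constructionB C).toAddSubgroup.index) ^ 2 := by
        rw [mul_pow, ← pow_card_mul_det_eq_index_sq b hG]
        ring
    _ = 2 ^ (2 * finrank (ZMod 2) C + Fintype.card ι) * 2 ^ m := by
        rw [hindex, ← pow_mul, ← pow_add]
        congr 1
        omega

theorem nonempty_discriminant_constructionB_addEquiv [Nonempty ι]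
    (heven : ∀ c ∈ C, Even (hammingNorm c)) {m : ℕ}
    (hm : m + 2 * finrank (ZMod 2) C = Fintype.card ι + 2)
    (b : Basis ι ℤ (constructionB C)) {G : Matrix ι ι ℤ}
    (hG : ∀ i j, 2 * G i j = (b i : ι → ℤ) ⬝ᵥ (b j : ι → ℤ))
    (hC : 1 ∈ C) (hι : 4 ∣ Fintype.card ι) :
    Nonempty (((ι → ℤ) ⧸ LinearMap.range G.mulVecLin) ≃+ (Fin m → ZMod 2)) := by
  classical
  exact nonempty_quotient_range_mulVecLin_addEquiv (mod_cast det_gram_constructionB heven hm b hG)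
    (smul_mem_range_mulVecLin_of_dual b two_ne_zero hG
      (exists_mem_constructionB_dotProduct_eq hC hι))

end ConstructionB

section ReedMuller

open Module

/-- The five words spanning `RM(1,4)` in the definition of `RM14`: the all-ones word, then the
coordinate functions. -/
def rm14Generator : Fin 5 → Fin 16 → ZMod 2 :=
  Fin.cons 1 fun i j => if (j : ℕ).testBit i then 1 else 0

theorem span_range_rm14Generator :
    Submodule.span (ZMod 2) (Set.range rm14Generator) = RM14 := by
  rw [rm14Generator, Fin.range_cons, ← Set.singleton_union]
  rfl

theorem one_mem_RM14 : 1 ∈ RM14 :=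
  Submodule.subset_span (Or.inl rfl)

theorem hammingNorm_sum_smul_rm14Generator :
    ∀ a : Fin 5 → ZMod 2, a ≠ 0 →
      hammingNorm (∑ i, a i • rm14Generator i) = 8 ∨
        hammingNorm (∑ i, a i • rm14Generator i) = 16 := by
  decide +kernel

theorem linearIndependent_rm14Generator : LinearIndependent (ZMod 2) rm14Generator := by
  refine Fintype.linearIndependent_iff.mpr fun a ha => ?_
  by_contra! hne
  have := hammingNorm_sum_smul_rm14Generator a (Function.ne_iff.mpr hne)
  simp [ha] at this

theorem finrank_RM14 : finrank (ZMod 2) RM14 = 5 := by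
  rw [← span_range_rm14Generator, finrank_span_eq_card linearIndependent_rm14Generator]
  rfl

theorem hammingNorm_of_mem_RM14 {c : Fin 16 → ZMod 2} (hc : c ∈ RM14) (hc0 : c ≠ 0) :
    hammingNorm c = 8 ∨ hammingNorm c = 16 := by
  rw [← span_range_rm14Generator, Submodule.mem_span_range_iff_exists_fun] at hc
  obtain ⟨a, rfl⟩ := hc
  exact hammingNorm_sum_smul_rm14Generator a fun ha => hc0 (by simp [ha])

theorem eight_le_hammingNorm_of_mem_RM14 (c : Fin 16 → ZMod 2) (hc : c ∈ RM14) (hc0 : c ≠ 0) :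
    8 ≤ hammingNorm c := by
  have := hammingNorm_of_mem_RM14 hc hc0
  omega

theorem four_dvd_hammingNorm_of_mem_RM14 (c : Fin 16 → ZMod 2) (hc : c ∈ RM14) :
    4 ∣ hammingNorm c := by
  rcases eq_or_ne c 0 with rfl | hc0
  · simp
  · have := hammingNorm_of_mem_RM14 hc hc0
    omega

end ReedMuller

/-- The Barnes–Wall lattice `BW16` (even of rank 16, minimal norm 4,
determinant `2^8`) is rootless and its discriminant group is `(ℤ/2ℤ)^8`, matching the
entry `DIH8(16,0)` of the classification.  (Norms are `(x ⬝ x)/2` in this model, so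
norm 4 reads `x ⬝ x = 8` and a root would have `x ⬝ x = 4`.) -/
theorem BW16_properties :
    (∀ x : Fin 16 → ℤ, memBW16 x → (4 : ℤ) ∣ x ⬝ᵥ x) ∧
    (∀ x : Fin 16 → ℤ, memBW16 x → x ≠ 0 → 8 ≤ x ⬝ᵥ x) ∧
    (∃ x : Fin 16 → ℤ, memBW16 x ∧ x ⬝ᵥ x = 8) ∧
    (∀ x : Fin 16 → ℤ, memBW16 x → x ⬝ᵥ x ≠ 4) ∧
    (∀ b : Fin 16 → (Fin 16 → ℤ), LinearIndependent ℤ b →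
      Submodule.span ℤ (Set.range b) = Submodule.span ℤ {x | memBW16 x} →
      ∀ G : Matrix (Fin 16) (Fin 16) ℤ, (∀ i j, 2 * G i j = b i ⬝ᵥ b j) →
        G.det = 2 ^ 8 ∧
        Nonempty (((Fin 16 → ℤ) ⧸ LinearMap.range G.mulVecLin) ≃+ (Fin 8 → ZMod 2))) := by
  refine ⟨fun x hx => four_dvd_dotProduct_self_of_mem_constructionB
      four_dvd_hammingNorm_of_mem_RM14 hx,
    fun x hx => eight_le_dotProduct_self_of_mem_constructionB eight_le_hammingNorm_of_mem_RM14 hx,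
    exists_mem_constructionB_dotProduct_self_eq_eight RM14, fun x hx hroot => ?_,
    fun b hb hspan G hG => ?_⟩
  · have hx0 : x ≠ 0 := by
      rintro rfl
      simp at hroot
    have := eight_le_dotProduct_self_of_mem_constructionB eight_le_hammingNorm_of_mem_RM14 hx hx0
    omega
  · obtain ⟨B, hB⟩ := exists_basis_coe_eq_of_span_eq hb
      (hspan.trans (Submodule.span_eq (constructionB RM14)))
    have heven (c) (hc : c ∈ RM14) : Even (hammingNorm c) :=
      even_iff_two_dvd.mpr (dvd_trans (by norm_num) (four_dvd_hammingNorm_of_mem_RM14 c hc))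
    have hGram : ∀ i j, 2 * G i j = (B i : Fin 16 → ℤ) ⬝ᵥ (B j : Fin 16 → ℤ) := by
      simpa only [hB] using hG
    have hrank : 8 + 2 * Module.finrank (ZMod 2) RM14 = Fintype.card (Fin 16) + 2 := by
      simp [finrank_RM14]
    exact ⟨det_gram_constructionB heven hrank B hGram,
      nonempty_discriminant_constructionB_addEquiv heven hrank B hGram one_mem_RM14 (by simp)⟩
end
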